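/- Let occ(σ) be the number of occurrences in σ of the mesh pattern Nr. 64, where an occurrence is a pair of indices i < j with a = σ_i < σ_j such that: every element before position i has value less than a; every element strictly between positions i and j has value less than a; and every element after position j has value greater than a. Let E(t,u) = Σ_{n≥0} t^n Σ_{σ∈K_n} u^{occ(σ)}. Then (u(1+ut)(1+t) + (1−u)(1+t+ut)·A(t))·E(t,u) = (u−1)(1+ut)(1+t) + (2−u+t(2+t+u−u^2))·A(t) as formal power series in t over ℚ[u]. In particular, at u = 0 the generating function P(t) for king permutations avoiding this pattern satisfies (1+t)·A(t)·P(t) = ((1+t)^2 + 1)·A(t) − (1+t). -/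

import Mathlib

/-- A permutation of `{0, …, n-1}` is a *king permutation* if consecutive entries
differ by more than 1 in absolute value. -/
def IsKing {n : ℕ} (σ : Equiv.Perm (Fin n)) : Prop :=
  ∀ i : Fin n, ∀ h : (i : ℕ) + 1 < n,
    1 < |((σ ⟨(i : ℕ) + 1, h⟩ : ℕ) : ℤ) - ((σ i : ℕ) : ℤ)|

/-- `kingCount n = A_n`, the number of king permutations of length `n`. -/
noncomputable def kingCount (n : ℕ) : ℕ :=
  Nat.card {σ : Equiv.Perm (Fin n) // IsKing σ}

/-- `A(t)` regarded as a power series over `ℚ[u]` (constant-polynomial coefficients). -/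
noncomputable def kingAu : PowerSeries (Polynomial ℚ) :=
  PowerSeries.mk fun n => (kingCount n : Polynomial ℚ)

/-- `u` viewed as a constant power series over `ℚ[u]`. -/
noncomputable def U : PowerSeries (Polynomial ℚ) :=
  PowerSeries.C (R := Polynomial ℚ) Polynomial.X

/-- `t`, the power series variable. -/
noncomputable def T : PowerSeries (Polynomial ℚ) :=
  PowerSeries.X

/-- An occurrence of the mesh pattern Nr. 64 in `σ`. -/
def OccP {n : ℕ} (σ : Equiv.Perm (Fin n)) (i j : Fin n) : Prop :=
  i < j ∧ σ i < σ j ∧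
    (∀ k : Fin n, k < i → σ k < σ i) ∧
    (∀ k : Fin n, i < k → k < j → σ k < σ i) ∧
    (∀ k : Fin n, j < k → σ i < σ k)

/-- The number of occurrences of the mesh pattern Nr. 64 in `σ`. -/
noncomputable def occP {n : ℕ} (σ : Equiv.Perm (Fin n)) : ℕ :=
  Nat.card {p : Fin n × Fin n // OccP σ p.1 p.2}

-- `E(t,u) = Σ_{n≥0} t^n Σ_{σ∈K_n} u^{occ(σ)}`, a power series in `t` over `ℚ[u]`.
open Classical in
noncomputable def Etu : PowerSeries (Polynomial ℚ) :=
  PowerSeries.mk fun n =>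
    ∑ σ : Equiv.Perm (Fin n),
      if IsKing σ then (Polynomial.X : Polynomial ℚ) ^ occP σ else 0

/-- `A(t) = Σ_{n≥0} A_n t^n` as a formal power series over `ℚ`. -/
noncomputable def kingA : PowerSeries ℚ :=
  PowerSeries.mk fun n => (kingCount n : ℚ)

/-- The generating function for king permutations avoiding the pattern. -/
noncomputable def Pav : PowerSeries ℚ :=
  PowerSeries.mk fun n =>
    (Nat.card {σ : Equiv.Perm (Fin n) // IsKing σ ∧ occP σ = 0} : ℚ)

/-- `σ` has a cut at `j`: positions below `j` are exactly those with values below `j`. -/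
def Cut {n : ℕ} (σ : Equiv.Perm (Fin n)) (j : ℕ) : Prop :=
  ∀ i : Fin n, (i : ℕ) < j ↔ (σ i : ℕ) < j

/-- First cut. -/
def FirstCut {n : ℕ} (σ : Equiv.Perm (Fin n)) (m : ℕ) : Prop :=
  1 ≤ m ∧ Cut σ m ∧ ∀ j, 1 ≤ j → j < m → ¬ Cut σ j

open Classical in
/-- Number of components. -/
noncomputable def comp {n : ℕ} (σ : Equiv.Perm (Fin n)) : ℕ :=
  ((Finset.Icc 1 n).filter (fun j => Cut σ j)).card

/-- Direct sum. -/
def dsum {m k : ℕ} (α : Equiv.Perm (Fin m)) (β : Equiv.Perm (Fin k)) :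
    Equiv.Perm (Fin (m + k)) :=
  finSumFinEquiv.permCongr (Equiv.Perm.sumCongr α β)

theorem dsum_left {m k : ℕ} (α : Equiv.Perm (Fin m)) (β : Equiv.Perm (Fin k)) (i : Fin m) :
    dsum α β (Fin.castAdd k i) = Fin.castAdd k (α i) := by
  simp [dsum, Equiv.permCongr_apply]

theorem dsum_right {m k : ℕ} (α : Equiv.Perm (Fin m)) (β : Equiv.Perm (Fin k)) (i : Fin k) :
    dsum α β (Fin.natAdd m i) = Fin.natAdd m (β i) := by
  simp [dsum, Equiv.permCongr_apply]

theorem dsum_injective {m k : ℕ} :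
    Function.Injective (fun p : Equiv.Perm (Fin m) × Equiv.Perm (Fin k) => dsum p.1 p.2) := by
  rintro ⟨α, β⟩ ⟨α', β'⟩ h
  simp only at h
  refine Prod.ext (Equiv.ext fun i => ?_) (Equiv.ext fun i => ?_)
  · have := congrArg (fun s => s (Fin.castAdd k i)) h
    simp only [dsum_left] at this
    exact Fin.castAdd_injective _ _ this
  · have := congrArg (fun s => s (Fin.natAdd m i)) h
    simp only [dsum_right] at this
    exact Fin.natAdd_injective _ _ this

theorem cut_dsum {m k : ℕ} (α : Equiv.Perm (Fin m)) (β : Equiv.Perm (Fin k)) :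
    Cut (dsum α β) m := by
  intro i
  induction i using Fin.addCases with
  | left i => rw [dsum_left]; simp
  | right i => rw [dsum_right]; simp

theorem cut_dsum_left {m k : ℕ} (α : Equiv.Perm (Fin m)) (β : Equiv.Perm (Fin k)) (j : ℕ)
    (hj : j ≤ m) : Cut (dsum α β) j ↔ Cut α j := by
  constructor
  · intro h i
    have := h (Fin.castAdd k i)
    rw [dsum_left] at this
    simpa using this
  · intro h i
    induction i using Fin.addCases with
    | left i => rw [dsum_left]; simpa using h i
    | right i => rw [dsum_right]; simp; omega

theorem cut_dsum_right {m k : ℕ} (α : Equiv.Perm (Fin m)) (β : Equiv.Perm (Fin k)) (j : ℕ) :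
    Cut (dsum α β) (m + j) ↔ Cut β j := by
  constructor
  · intro h i
    have := h (Fin.natAdd m i)
    rw [dsum_right] at this
    simpa using this
  · intro h i
    induction i using Fin.addCases with
    | left i =>
      rw [dsum_left]
      have h1 := i.2
      have h2 := (α i).2
      simp only [Fin.val_castAdd]
      omega
    | right i => rw [dsum_right]; simpa using h i

theorem exists_dsum {m k : ℕ} (σ : Equiv.Perm (Fin (m + k))) (h : Cut σ m) :
    ∃ p : Equiv.Perm (Fin m) × Equiv.Perm (Fin k), dsum p.1 p.2 = σ := by
  have := Equiv.Perm.mem_sumCongrHom_range_of_perm_mapsTo_inl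
    (σ := finSumFinEquiv.symm.permCongr σ) (by
      rintro _ ⟨i, rfl⟩
      have h1 := (h (Fin.castAdd k i)).1 (by simp)
      refine ⟨⟨_, h1⟩, ?_⟩
      rw [Equiv.permCongr_apply]
      rw [Equiv.eq_symm_apply]
      ext
      simp)
  obtain ⟨p, hp⟩ := this
  refine ⟨p, ?_⟩
  have hp' : Equiv.Perm.sumCongr p.1 p.2 = finSumFinEquiv.symm.permCongr σ := hp
  unfold dsum
  rw [hp']
  ext i
  simp [Equiv.permCongr_apply]

open Classical in
theorem sum_cut {R : Type*} [CommRing R] {m k : ℕ} (f : Equiv.Perm (Fin (m + k)) → R) :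
    ∑ σ, (if Cut σ m then f σ else 0) =
      ∑ α : Equiv.Perm (Fin m), ∑ β : Equiv.Perm (Fin k), f (dsum α β) := by
  rw [← Finset.sum_filter, ← Finset.sum_product', Finset.univ_product_univ]
  symm
  refine Finset.sum_nbij (fun p => dsum p.1 p.2) ?_ ?_ ?_ ?_
  · intro p _; simp [cut_dsum]
  · exact dsum_injective.injOn
  · intro σ hσ
    obtain ⟨p, hp⟩ := exists_dsum σ (by simpa using hσ)
    exact ⟨p, by simp, hp⟩
  · intro p _; rfl

theorem isKing_iff {n : ℕ} (σ : Equiv.Perm (Fin n)) :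
    IsKing σ ↔ ∀ i j : Fin n, (j : ℕ) = i + 1 → 1 < |((σ j : ℕ) : ℤ) - ((σ i : ℕ) : ℤ)| := by
  constructor
  · intro h i j hj
    have := h i (by omega)
    have e : j = ⟨(i : ℕ) + 1, by omega⟩ := Fin.ext hj
    rw [e]; exact this
  · intro h i hi
    exact h i ⟨i + 1, hi⟩ rfl

theorem isKing_dsum {m k : ℕ} (α : Equiv.Perm (Fin m)) (β : Equiv.Perm (Fin k)) :
    IsKing (dsum α β) ↔ IsKing α ∧ IsKing β ∧
      ∀ (i : Fin m) (j : Fin k), (i : ℕ) + 1 = m → (j : ℕ) = 0 →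
        ¬ ((α i : ℕ) + 1 = m ∧ (β j : ℕ) = 0) := by
  simp only [isKing_iff]
  constructor
  · intro h
    refine ⟨fun i j hij => ?_, fun i j hij => ?_, fun i j hi hj => ?_⟩
    · have := h (Fin.castAdd k i) (Fin.castAdd k j) (by simpa using hij)
      simpa [dsum_left] using this
    · have := h (Fin.natAdd m i) (Fin.natAdd m j) (by simp; omega)
      simpa [dsum_right] using this
    · rintro ⟨h1, h2⟩
      have := h (Fin.castAdd k i) (Fin.natAdd m j) (by simp; omega)
      simp only [dsum_left, dsum_right, Fin.val_castAdd, Fin.val_natAdd] at this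
      rw [lt_abs] at this
      push_cast at this
      omega
  · rintro ⟨h1, h2, h3⟩ i j hij
    induction i using Fin.addCases with
    | left i =>
      induction j using Fin.addCases with
      | left j =>
        simp only [Fin.val_castAdd] at hij
        simpa [dsum_left] using h1 i j hij
      | right j =>
        simp only [Fin.val_castAdd, Fin.val_natAdd] at hij
        have hi := i.2
        have := h3 i j (by omega) (by omega)
        have h4 := (α i).2
        simp only [dsum_left, dsum_right, Fin.val_castAdd, Fin.val_natAdd]
        rw [lt_abs]
        push_cast
        omega
    | right i =>
      induction j using Fin.addCases with
      | left j =>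
        simp only [Fin.val_castAdd, Fin.val_natAdd] at hij
        have := j.2
        omega
      | right j =>
        simp only [Fin.val_natAdd] at hij
        simpa [dsum_right] using h2 i j (by omega)

/-- Indecomposable permutations. -/
def Indec {m : ℕ} (α : Equiv.Perm (Fin m)) : Prop :=
  1 ≤ m ∧ ∀ j, 1 ≤ j → j < m → ¬ Cut α j

theorem firstCut_dsum {m k : ℕ} (α : Equiv.Perm (Fin m)) (β : Equiv.Perm (Fin k)) :
    FirstCut (dsum α β) m ↔ Indec α := by
  unfold FirstCut Indec
  constructor
  · rintro ⟨h1, _, h2⟩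
    exact ⟨h1, fun j hj hjm => by rw [← cut_dsum_left α β j hjm.le]; exact h2 j hj hjm⟩
  · rintro ⟨h1, h2⟩
    exact ⟨h1, cut_dsum α β, fun j hj hjm => by
      rw [cut_dsum_left α β j hjm.le]; exact h2 j hj hjm⟩

theorem comp_dsum {m k : ℕ} (α : Equiv.Perm (Fin m)) (β : Equiv.Perm (Fin k)) (h : Indec α) :
    comp (dsum α β) = comp β + 1 := by
  classical
  unfold comp
  have : (Finset.Icc 1 (m + k)).filter (fun j => Cut (dsum α β) j) =
      insert m (((Finset.Icc 1 k).filter (fun j => Cut β j)).image (fun j => m + j)) := by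
    ext j
    simp only [Finset.mem_filter, Finset.mem_Icc, Finset.mem_insert, Finset.mem_image]
    constructor
    · rintro ⟨⟨h1, h2⟩, h3⟩
      by_cases hj : j ≤ m
      · left
        by_contra hne
        exact h.2 j h1 (by omega) ((cut_dsum_left α β j hj).1 h3)
      · right
        obtain ⟨l, rfl⟩ := Nat.exists_eq_add_of_le (le_of_not_ge hj)
        exact ⟨l, ⟨⟨by omega, by omega⟩, (cut_dsum_right α β l).1 h3⟩, rfl⟩
    · rintro (rfl | ⟨l, ⟨⟨h1, h2⟩, h3⟩, rfl⟩)
      · exact ⟨⟨h.1, by omega⟩, cut_dsum α β⟩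
      · exact ⟨⟨by omega, by omega⟩, (cut_dsum_right α β l).2 h3⟩
  rw [this, Finset.card_insert_of_notMem, Finset.card_image_of_injective]
  · intro a b hab; simpa using hab
  · simp only [Finset.mem_image, Finset.mem_filter, Finset.mem_Icc]
    rintro ⟨l, ⟨⟨h1, _⟩, _⟩, h2⟩
    omega

theorem indec_last {m : ℕ} (α : Equiv.Perm (Fin m)) (h : Indec α) (hm : 2 ≤ m) (i : Fin m)
    (hi : (i : ℕ) + 1 = m) : (α i : ℕ) + 1 ≠ m := by
  intro h1
  refine h.2 (m - 1) (by omega) (by omega) fun j => ?_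
  have e : (α j = α i) ↔ j = i := α.injective.eq_iff
  rw [Fin.ext_iff, Fin.ext_iff] at e
  have := j.2
  have := (α j).2
  omega

theorem cut_one_iff {n : ℕ} (σ : Equiv.Perm (Fin (n + 1))) : Cut σ 1 ↔ σ 0 = 0 := by
  constructor
  · intro h
    have := (h 0).1 (by simp)
    have h2 : (σ 0 : ℕ) = 0 := by simpa using this
    exact Fin.ext h2
  · intro h i
    have e : (σ i = σ 0) ↔ i = 0 := σ.injective.eq_iff
    rw [h] at e
    rw [Fin.ext_iff, Fin.ext_iff] at e
    rw [Fin.val_zero] at e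
    omega

theorem cut_top {n : ℕ} (σ : Equiv.Perm (Fin n)) : Cut σ n := by
  intro i; simp

open Classical in
/-- Weighted counts of king permutations. -/
noncomputable def fW {R : Type*} [CommRing R] (x : R) (n : ℕ) : R :=
  ∑ σ : Equiv.Perm (Fin n), if IsKing σ then x ^ comp σ else 0

open Classical in
/-- Weighted counts of king permutations not starting with the minimum. -/
noncomputable def gW {R : Type*} [CommRing R] (x : R) (n : ℕ) : R :=
  ∑ σ : Equiv.Perm (Fin n), if IsKing σ ∧ ¬ (0 < n ∧ FirstCut σ 1) then x ^ comp σ else 0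

open Classical in
/-- Number of indecomposable king permutations of length at least 2. -/
noncomputable def iW (R : Type*) [CommRing R] (m : ℕ) : R :=
  ∑ α : Equiv.Perm (Fin m), if IsKing α ∧ Indec α ∧ 2 ≤ m then 1 else 0

open Classical in
theorem sum_first_big {R : Type*} [CommRing R] (x : R) (m k : ℕ) (hm : 2 ≤ m) :
    ∑ σ : Equiv.Perm (Fin (m + k)), (if IsKing σ ∧ FirstCut σ m then x ^ comp σ else 0) =
      x * iW R m * fW x k := by
  have h1 : ∀ σ : Equiv.Perm (Fin (m + k)),
      (if IsKing σ ∧ FirstCut σ m then x ^ comp σ else 0) =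
      if Cut σ m then (if IsKing σ ∧ FirstCut σ m then x ^ comp σ else 0) else 0 := by
    intro σ
    by_cases h : Cut σ m
    · simp [h]
    · have : ¬ FirstCut σ m := fun h' => h h'.2.1
      simp [h, this]
  rw [Finset.sum_congr rfl (fun σ _ => h1 σ), sum_cut]
  unfold iW fW
  rw [mul_assoc, Finset.sum_mul_sum, Finset.mul_sum]
  refine Finset.sum_congr rfl fun α _ => ?_
  rw [Finset.mul_sum]
  refine Finset.sum_congr rfl fun β _ => ?_
  rw [firstCut_dsum, isKing_dsum]
  by_cases hi : Indec α
  · have hb : ∀ (i : Fin m) (j : Fin k), (i : ℕ) + 1 = m → (j : ℕ) = 0 →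
        ¬ ((α i : ℕ) + 1 = m ∧ (β j : ℕ) = 0) := fun i j h _ h' =>
      indec_last α hi hm i h h'.1
    rw [comp_dsum α β hi]
    by_cases ha : IsKing α <;> by_cases hb' : IsKing β <;> simp [hi, ha, hb', hm]
    · rw [if_pos, pow_succ']
      intro i j h1 h2 h3 h4
      exact hb i j h1 h2 ⟨h3, h4⟩
  · simp [hi]

open Classical in
theorem sum_first_one {R : Type*} [CommRing R] (x : R) (k : ℕ) :
    ∑ σ : Equiv.Perm (Fin (1 + k)), (if IsKing σ ∧ FirstCut σ 1 then x ^ comp σ else 0) =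
      x * gW x k := by
  have h1 : ∀ σ : Equiv.Perm (Fin (1 + k)),
      (if IsKing σ ∧ FirstCut σ 1 then x ^ comp σ else 0) =
      if Cut σ 1 then (if IsKing σ ∧ FirstCut σ 1 then x ^ comp σ else 0) else 0 := by
    intro σ
    by_cases h : Cut σ 1
    · simp [h]
    · have : ¬ FirstCut σ 1 := fun h' => h h'.2.1
      simp [h, this]
  rw [Finset.sum_congr rfl (fun σ _ => h1 σ), sum_cut]
  unfold gW
  rw [Fintype.sum_unique, Finset.mul_sum]
  refine Finset.sum_congr rfl fun β _ => ?_
  generalize hα : (default : Equiv.Perm (Fin 1)) = α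
  have hi : Indec α := ⟨le_refl _, fun j h1 h2 => by omega⟩
  have ha : IsKing α := fun i h => by omega
  rw [firstCut_dsum, isKing_dsum, comp_dsum α β hi]
  have e : (∀ (i : Fin 1) (j : Fin k), (i : ℕ) + 1 = 1 → (j : ℕ) = 0 →
        ¬ ((α i : ℕ) + 1 = 1 ∧ (β j : ℕ) = 0)) ↔ ¬ (0 < k ∧ FirstCut β 1) := by
    rcases k with _ | k
    · simp
    · have : FirstCut β 1 ↔ β 0 = 0 := by
        rw [← cut_one_iff]
        exact ⟨fun h => h.2.1, fun h => ⟨le_refl _, h, fun j h1 h2 => by omega⟩⟩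
      rw [this]
      constructor
      · rintro h ⟨_, h2⟩
        exact h 0 0 (by simp) (by simp) ⟨by omega, by simp [h2]⟩
      · rintro h i j _ hj ⟨_, h2⟩
        have : j = 0 := Fin.ext hj
        subst this
        exact h ⟨by omega, Fin.ext h2⟩
  rw [e]
  by_cases hb : IsKing β <;> by_cases hf : 0 < k ∧ FirstCut β 1 <;> simp [hb, hf, hi, ha, pow_succ']

theorem firstCut_unique {n : ℕ} (σ : Equiv.Perm (Fin n)) {a b : ℕ} (ha : FirstCut σ a)
    (hb : FirstCut σ b) : a = b := by
  rcases lt_trichotomy a b with h | h | h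
  · exact absurd ha.2.1 (hb.2.2 a ha.1 h)
  · exact h
  · exact absurd hb.2.1 (ha.2.2 b hb.1 h)

theorem exists_firstCut {n : ℕ} (hn : 0 < n) (σ : Equiv.Perm (Fin n)) :
    ∃ m, m ≤ n ∧ FirstCut σ m := by
  classical
  have h : ∃ m, 1 ≤ m ∧ Cut σ m := ⟨n, hn, cut_top σ⟩
  refine ⟨Nat.find h, Nat.find_min' h ⟨hn, cut_top σ⟩, (Nat.find_spec h).1, (Nat.find_spec h).2, ?_⟩
  intro j h1 h2 h3
  exact Nat.find_min h h2 ⟨h1, h3⟩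

theorem iW_small {R : Type*} [CommRing R] {m : ℕ} (hm : ¬ 2 ≤ m) : iW R m = 0 := by
  unfold iW
  refine Finset.sum_eq_zero fun α _ => ?_
  rw [if_neg]
  exact fun h => hm h.2.2

open Classical in
theorem sum_first_big' {R : Type*} [CommRing R] (x : R) (m k n : ℕ) (h : m + k = n) :
    x * iW R m * fW x k = ∑ σ : Equiv.Perm (Fin n),
      (if IsKing σ ∧ FirstCut σ m ∧ 2 ≤ m then x ^ comp σ else 0) := by
  subst h
  by_cases hm : 2 ≤ m
  · rw [← sum_first_big x m k hm]
    simp [hm]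
  · rw [iW_small hm]
    simp [hm]

theorem gW_succ {R : Type*} [CommRing R] (x : R) (n : ℕ) (hn : 0 < n) :
    gW x n = ∑ p ∈ Finset.HasAntidiagonal.antidiagonal n, x * iW R p.1 * fW x p.2 := by
  classical
  rw [Finset.sum_congr rfl (fun p hp => sum_first_big' x p.1 p.2 n (Finset.HasAntidiagonal.mem_antidiagonal.1 hp)),
    Finset.sum_comm]
  unfold gW
  refine Finset.sum_congr rfl fun σ _ => ?_
  obtain ⟨m, hm, hf⟩ := exists_firstCut hn σ
  rw [Finset.sum_eq_single (m, n - m)]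
  · have : (¬ (0 < n ∧ FirstCut σ 1)) ↔ (FirstCut σ m ∧ 2 ≤ m) := by
      constructor
      · intro h
        refine ⟨hf, ?_⟩
        have := hf.1
        by_contra h2
        have : m = 1 := by omega
        subst this
        exact h ⟨hn, hf⟩
      · rintro ⟨_, h2⟩ ⟨_, h3⟩
        have := firstCut_unique σ hf h3
        omega
    simp only [this]
  · rintro ⟨a, b⟩ hp hne
    rw [if_neg]
    rintro ⟨_, h2, _⟩
    have h3 := firstCut_unique σ hf h2
    rw [Finset.HasAntidiagonal.mem_antidiagonal] at hp
    simp only at hp h3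
    exact hne (by ext <;> simp <;> omega)
  · intro h
    exact absurd (Finset.HasAntidiagonal.mem_antidiagonal.2 (by simp; omega)) h

theorem comp_zero (σ : Equiv.Perm (Fin 0)) : comp σ = 0 := by
  simp [comp]

theorem isKing_zero (σ : Equiv.Perm (Fin 0)) : IsKing σ := fun i => i.elim0

theorem fW_zero {R : Type*} [CommRing R] (x : R) : fW x 0 = 1 := by
  simp [fW, comp_zero, isKing_zero]

theorem gW_zero {R : Type*} [CommRing R] (x : R) : gW x 0 = 1 := by
  simp [gW, comp_zero, isKing_zero]

theorem fW_succ {R : Type*} [CommRing R] (x : R) (n : ℕ) :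
    fW x (n + 1) = gW x (n + 1) + x * gW x n := by
  classical
  have h := sum_first_one x n
  have e : ∀ N, N = n + 1 → ∑ σ : Equiv.Perm (Fin N),
      (if IsKing σ ∧ FirstCut σ 1 then x ^ comp σ else 0) = x * gW x n := by
    intro N hN
    have : N = 1 + n := by omega
    subst this
    exact h
  rw [← e _ rfl]
  unfold fW gW
  rw [← Finset.sum_add_distrib]
  refine Finset.sum_congr rfl fun σ _ => ?_
  by_cases hb : IsKing σ <;> by_cases hf : FirstCut σ 1 <;> simp [hb, hf]

theorem functional_eq {R : Type*} [CommRing R] (x : R) :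
    PowerSeries.mk (fW x) = (1 + PowerSeries.C x * PowerSeries.X) *
      (1 + PowerSeries.C x * PowerSeries.mk (iW R) * PowerSeries.mk (fW x)) := by
  have hG : PowerSeries.mk (gW x) =
      1 + PowerSeries.C x * PowerSeries.mk (iW R) * PowerSeries.mk (fW x) := by
    ext n
    rw [mul_assoc, map_add, PowerSeries.coeff_C_mul, PowerSeries.coeff_mul, PowerSeries.coeff_mk]
    simp only [PowerSeries.coeff_mk, PowerSeries.coeff_one]
    rcases Nat.eq_zero_or_pos n with rfl | hn
    · simp [gW_zero, iW_small]
    · rw [gW_succ x n hn, if_neg (by omega), zero_add, Finset.mul_sum]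
      exact Finset.sum_congr rfl fun p _ => mul_assoc _ _ _
  rw [← hG]
  ext n
  rw [add_mul, one_mul, map_add, mul_assoc, PowerSeries.coeff_C_mul]
  rcases n with _ | n
  · simp [fW_zero, gW_zero]
  · rw [PowerSeries.coeff_succ_X_mul]
    simp [fW_succ]

theorem occ_cut {n : ℕ} (σ : Equiv.Perm (Fin n)) (i j : Fin n) :
    OccP σ i j ↔ 1 ≤ (j : ℕ) ∧ Cut σ j ∧ (σ i : ℕ) + 1 = j := by
  constructor
  · rintro ⟨hij, h1, h2, h3, h4⟩
    have key : ∀ k : Fin n, k < j ↔ σ k ≤ σ i := by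
      intro k
      constructor
      · intro hk
        rcases lt_trichotomy k i with h | h | h
        · exact (h2 k h).le
        · rw [h]
        · exact (h3 k h hk).le
      · intro hk
        by_contra hj
        rcases lt_or_eq_of_le (not_lt.1 hj) with h | h
        · exact absurd (h4 k h) (not_lt.2 hk)
        · rw [← h] at hk
          exact absurd h1 (not_lt.2 hk)
    have hc : (Finset.Iio j).map σ.toEmbedding = Finset.Iic (σ i) := by
      ext v
      simp only [Finset.mem_map, Finset.mem_Iio, Finset.mem_Iic, Equiv.coe_toEmbedding]
      constructor
      · rintro ⟨k, hk, rfl⟩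
        exact (key k).1 hk
      · intro hv
        exact ⟨σ.symm v, (key _).2 (by simpa using hv), by simp⟩
    have hc2 := congrArg Finset.card hc
    rw [Finset.card_map, Fin.card_Iio, Fin.card_Iic] at hc2
    refine ⟨by omega, fun k => ?_, hc2.symm⟩
    have := key k
    rw [Fin.lt_def, Fin.le_def] at this
    omega
  · rintro ⟨h1, h2, h3⟩
    have hi := (h2 i).2 (by omega)
    have hne : ∀ k, k ≠ i → (σ k : ℕ) ≠ σ i := fun k hk h => hk (σ.injective (Fin.ext h))
    have hj := h2 j
    refine ⟨hi, ?_, fun k hk => ?_, fun k hk hk' => ?_, fun k hk => ?_⟩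
    · rw [Fin.lt_def]; omega
    · have := h2 k
      have := hne k hk.ne
      rw [Fin.lt_def] at hk ⊢
      omega
    · have := h2 k
      have := hne k hk.ne'
      rw [Fin.lt_def] at hk hk' ⊢
      omega
    · have := h2 k
      rw [Fin.lt_def] at hk ⊢
      omega

theorem occP_comp {n : ℕ} (hn : 0 < n) (σ : Equiv.Perm (Fin n)) : comp σ = occP σ + 1 := by
  classical
  have h1 : (Finset.Icc 1 n).filter (fun j => Cut σ j) =
      insert n ((Finset.Ico 1 n).filter (fun j => Cut σ j)) := by
    ext j
    simp only [Finset.mem_filter, Finset.mem_Icc, Finset.mem_insert, Finset.mem_Ico]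
    constructor
    · rintro ⟨⟨h1, h2⟩, h3⟩
      rcases Nat.lt_or_ge j n with h | h
      · exact Or.inr ⟨⟨h1, h⟩, h3⟩
      · exact Or.inl (by omega)
    · rintro (rfl | ⟨⟨h1, h2⟩, h3⟩)
      · exact ⟨⟨hn, le_refl _⟩, cut_top σ⟩
      · exact ⟨⟨h1, h2.le⟩, h3⟩
  unfold comp occP
  rw [h1, Finset.card_insert_of_notMem (by simp), Nat.card_eq_fintype_card, Fintype.card_subtype]
  congr 1
  symm
  refine Finset.card_nbij (fun p => (p.2 : ℕ)) ?_ ?_ ?_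
  · rintro ⟨i, j⟩ hp
    have hp' : OccP σ i j := by simpa using hp
    rw [occ_cut] at hp'
    simp only [Finset.coe_filter, Finset.mem_filter, Finset.mem_Ico, Set.mem_ofPred_eq]
    exact ⟨⟨hp'.1, j.2⟩, hp'.2.1⟩
  · rintro ⟨i, j⟩ hp ⟨i', j'⟩ hp' hjj
    have h1 : OccP σ i j := by simpa using hp
    have h2 : OccP σ i' j' := by simpa using hp'
    rw [occ_cut] at h1 h2
    simp only at hjj
    have : σ i = σ i' := Fin.ext (by omega)
    exact Prod.ext (σ.injective this) (Fin.ext hjj)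
  · intro j hj
    simp only [Finset.coe_filter, Finset.mem_Ico, Set.mem_ofPred_eq] at hj
    refine ⟨(σ.symm ⟨j - 1, by omega⟩, ⟨j, hj.1.2⟩), ?_, rfl⟩
    simp only [Finset.coe_filter, Finset.mem_univ, true_and, Set.mem_ofPred_eq]
    rw [occ_cut]
    refine ⟨hj.1.1, hj.2, ?_⟩
    simp only [Equiv.apply_symm_apply]
    omega

theorem kingCount_eq (n : ℕ) : (kingCount n : Polynomial ℚ) = fW 1 n := by
  classical
  simp [kingCount, fW, Nat.card_eq_fintype_card, Fintype.card_subtype]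

theorem U_mul_Etu : U * Etu = PowerSeries.mk (fW (Polynomial.X : Polynomial ℚ)) + U - 1 := by
  classical
  ext1 n
  unfold U Etu
  rw [PowerSeries.coeff_C_mul, map_sub, map_add, PowerSeries.coeff_mk, PowerSeries.coeff_mk,
    PowerSeries.coeff_C, PowerSeries.coeff_one]
  rcases Nat.eq_zero_or_pos n with rfl | hn
  · have : ∀ σ : Equiv.Perm (Fin 0), occP σ = 0 := fun σ => by simp [occP]
    simp [fW_zero, isKing_zero, this]
  · rw [if_neg (by omega), if_neg (by omega), add_zero, sub_zero, Finset.mul_sum]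
    unfold fW
    refine Finset.sum_congr rfl fun σ _ => ?_
    rw [occP_comp hn]
    split_ifs
    · rw [pow_succ']
    · simp

theorem main_first :
    (U * (1 + U * T) * (1 + T) + (1 - U) * (1 + T + U * T) * kingAu) * Etu
      = (U - 1) * (1 + U * T) * (1 + T)
          + (2 - U + T * (2 + T + U - U ^ 2)) * kingAu := by
  have hA := functional_eq (1 : Polynomial ℚ)
  have hA' : PowerSeries.mk (fW (1 : Polynomial ℚ)) = kingAu := by
    ext1 n
    simp [kingAu, kingCount_eq]
  rw [hA', map_one, one_mul, one_mul] at hA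
  have hF := functional_eq (Polynomial.X : Polynomial ℚ)
  have hE := U_mul_Etu
  have hU : U ≠ 0 := by
    intro h
    have := congrArg (PowerSeries.coeff 0) h
    simp [U] at this
  change _ = (1 + U * T) * (1 + U * _ * _) at hF
  change _ = (1 + T) * _ at hA
  generalize PowerSeries.mk (fW (Polynomial.X : Polynomial ℚ)) = F at *
  generalize PowerSeries.mk (iW (Polynomial ℚ)) = I at *
  generalize kingAu = A at *
  generalize Etu = E at *
  apply mul_left_cancel₀ hU
  linear_combination (U * (1 + U * T) * (1 + T) + (1 - U) * (1 + T + U * T) * A) * hE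
    - U * (1 + U * T) * F * hA + (1 + T) * A * hF

theorem main_second :
    (1 + PowerSeries.X) * kingA * Pav
      = ((1 + PowerSeries.X) ^ 2 + 1) * kingA - (1 + PowerSeries.X) := by
  classical
  have h := congrArg (PowerSeries.map (Polynomial.evalRingHom (0 : ℚ))) main_first
  have hU : PowerSeries.map (Polynomial.evalRingHom (0 : ℚ)) U = 0 := by
    simp [U]
  have hT : PowerSeries.map (Polynomial.evalRingHom (0 : ℚ)) T = PowerSeries.X := by
    simp [T]
  have hA : PowerSeries.map (Polynomial.evalRingHom (0 : ℚ)) kingAu = kingA := by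
    ext n
    simp [kingAu, kingA]
  have hE : PowerSeries.map (Polynomial.evalRingHom (0 : ℚ)) Etu = Pav := by
    ext n
    rw [PowerSeries.coeff_map]
    unfold Etu Pav
    rw [PowerSeries.coeff_mk, PowerSeries.coeff_mk, map_sum, Nat.card_eq_fintype_card,
      Fintype.card_subtype, Finset.card_filter, Nat.cast_sum]
    refine Finset.sum_congr rfl fun σ _ => ?_
    by_cases h1 : IsKing σ <;> by_cases h2 : occP σ = 0 <;> simp [h1, h2]
  have h2 : PowerSeries.map (Polynomial.evalRingHom (0 : ℚ)) 2 = 2 := map_ofNat _ 2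
  simp only [map_mul, map_add, map_sub, map_one, map_pow, hU, hT, hA, hE, h2] at h
  linear_combination h

theorem statement_19 :
    (U * (1 + U * T) * (1 + T) + (1 - U) * (1 + T + U * T) * kingAu) * Etu
      = (U - 1) * (1 + U * T) * (1 + T)
          + (2 - U + T * (2 + T + U - U ^ 2)) * kingAu ∧
    (1 + PowerSeries.X) * kingA * Pav
      = ((1 + PowerSeries.X) ^ 2 + 1) * kingA - (1 + PowerSeries.X) := by
  exact ⟨main_first, main_second⟩
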